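/- Let μ(x) = Π_{i=1}^N sin^a|x_i − x_{i+1}|. Then for every spin state |s⟩ ∈ Σ, the Σ-valued functions Ψ_3 = μ · [ (2a/(2a+1)) Λ|s⟩ + Σ_{i≠j} cos(2(x_i − x_j)) |s_j⟩ ] and Ψ_4 = μ · Σ_{i≠j} sin(2(x_i − x_j)) |s_j⟩ satisfy H_2 Ψ_{3,4} = (2Na² + 8(2a+1)) Ψ_{3,4} at every point of C_2. -/

import Mathlib

noncomputable section

/-- The spin space `Σ`: complex functions on `Fin N → Fin d`. -/
abbrev Spin (N d : ℕ) : Type := (Fin N → Fin d) → ℂ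

/-- Partial derivative `∂_i F` of a function of `N` real variables. -/
noncomputable def pd {N : ℕ} {E : Type} [NormedAddCommGroup E] [NormedSpace ℝ E]
    (i : Fin N) (F : (Fin N → ℝ) → E) : (Fin N → ℝ) → E :=
  fun x => fderiv ℝ F x (Pi.single i 1)

/-- The spin exchange operator `S_{ij}`, transposing the `i`-th and `j`-th spin slots. -/
def Sop {N d : ℕ} (i j : Fin N) (v : Spin N d) : Spin N d :=
  fun c => v (c ∘ Equiv.swap i j)

/-- The action of a permutation `π ∈ S_N` on the spin space, permuting the `N` spin slots. -/
def spinPerm {N d : ℕ} (π : Equiv.Perm (Fin N)) (v : Spin N d) : Spin N d :=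
  fun c => v (c ∘ π)

/-- The spin vector `|s_i⟩ = (1/N!) ∑_{π ∈ S_N, π(1) = i} π |s⟩`. -/
noncomputable def sComp {N d : ℕ} [NeZero N] (s : Spin N d) (i : Fin N) : Spin N d :=
  (N.factorial : ℂ)⁻¹ •
    ∑ π ∈ Finset.univ.filter (fun π : Equiv.Perm (Fin N) => π 0 = i), spinPerm π s

/-- The symmetrization `Λ|s⟩ = ∑ i, |s_i⟩`. -/
noncomputable def Lam {N d : ℕ} [NeZero N] (s : Spin N d) : Spin N d :=
  ∑ i : Fin N, sComp s i

/-- The configuration space `C_2 = {x : x_1 < ⋯ < x_N, x_N - x_1 < π}`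
(here `x (-1)` is the last coordinate `x_N`). -/
def C2 (N : ℕ) [NeZero N] : Set (Fin N → ℝ) :=
  {x | StrictMono x ∧ x (-1) - x 0 < Real.pi}

/-- The Hamiltonian `H_2 = -∑ i ∂_i² + V_2` with
`V_2 = 2a² ∑ i cot(x_i - x_{i-1}) cot(x_i - x_{i+1})
  + 2a ∑ i csc²(x_i - x_{i+1}) (a - S_{i,i+1})` (indices cyclic). -/
noncomputable def H2 {N d : ℕ} [NeZero N] (a : ℝ)
    (Ψ : (Fin N → ℝ) → Spin N d) : (Fin N → ℝ) → Spin N d :=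
  fun x =>
    -(∑ i : Fin N, pd i (pd i Ψ) x)
    + (2 * a ^ 2 * ∑ i : Fin N,
        (Real.cos (x i - x (i - 1)) / Real.sin (x i - x (i - 1))) *
          (Real.cos (x i - x (i + 1)) / Real.sin (x i - x (i + 1)))) • Ψ x
    + (2 * a) • ∑ i : Fin N,
        ((Real.sin (x i - x (i + 1))) ^ 2)⁻¹ • (a • Ψ x - Sop i (i + 1) (Ψ x))

/-- The gauge factor `μ(x) = ∏ i sin^a |x_i - x_{i+1}|` (indices cyclic). -/
noncomputable def mu2 {N : ℕ} [NeZero N] (a : ℝ) (x : Fin N → ℝ) : ℝ :=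
  ∏ i : Fin N, (Real.sin |x i - x (i + 1)|) ^ a

section helpers
open Real

variable {N : ℕ} [NeZero N]

/-- open set on which everything is smooth -/
def UU (N : ℕ) [NeZero N] : Set (Fin N → ℝ) :=
  {x | ∀ k : Fin N, 0 < |x k - x (k + 1)| ∧ |x k - x (k + 1)| < π}

lemma isOpen_UU : IsOpen (UU N) := by
  unfold UU
  rw [Set.ofPred_forall]
  refine isOpen_iInter_of_finite fun k => ?_
  have hc : Continuous fun x : Fin N → ℝ => |x k - x (k + 1)| := by fun_prop
  exact (isOpen_lt continuous_const hc).inter (isOpen_lt hc continuous_const)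

lemma C2_sub (hN : 3 ≤ N) {x : Fin N → ℝ} (hx : x ∈ C2 N) : x ∈ UU N := by
  obtain ⟨n, rfl⟩ : ∃ n, N = n + 1 := ⟨N - 1, by omega⟩
  obtain ⟨hm, hp⟩ := hx
  have hlast : (-1 : Fin (n + 1)) = Fin.last n := by
    rw [neg_eq_iff_add_eq_zero]; exact (add_comm _ _).trans (Fin.last_add_one n)
  have key : ∀ i j, i < j → 0 < x j - x i ∧ x j - x i < π := by
    intro i j hij
    have h1 := hm hij
    have h2 : x j ≤ x (-1) := hm.monotone (by rw [hlast]; exact Fin.le_last j)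
    have h3 : x 0 ≤ x i := hm.monotone (Fin.zero_le i)
    constructor <;> linarith
  intro k
  by_cases hk : k = Fin.last n
  · have := key 0 k (by subst hk; exact Fin.lt_def.2 (by simp; omega))
    subst hk
    rw [Fin.last_add_one, abs_of_pos this.1]; exact this
  · have := key k (k + 1) (Fin.lt_add_one_iff.2 (Fin.lt_last_iff_ne_last.2 hk))
    rw [abs_sub_comm, abs_of_pos this.1]; exact this

lemma sin_abs_UU {x : Fin N → ℝ} (hx : x ∈ UU N) (k : Fin N) :
    0 < sin |x k - x (k + 1)| := sin_pos_of_pos_of_lt_pi (hx k).1 (hx k).2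

lemma sin_ne_UU {x : Fin N → ℝ} (hx : x ∈ UU N) (k : Fin N) :
    sin (x k - x (k + 1)) ≠ 0 := by
  have := sin_abs_UU hx k
  rcases abs_cases (x k - x (k + 1)) with h | h
  · rw [h.1] at this; exact this.ne'
  · rw [h.1, sin_neg] at this; intro h0; rw [h0] at this; simp at this

lemma mu2_eq (a : ℝ) {x : Fin N → ℝ} (hx : x ∈ UU N) :
    mu2 a x = exp (a * ∑ k, log (sin (x k - x (k + 1)))) := by
  unfold mu2
  rw [Finset.mul_sum, exp_sum]
  refine Finset.prod_congr rfl fun k _ => ?_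
  rw [rpow_def_of_pos (sin_abs_UU hx k), mul_comm]
  congr 2
  rcases abs_cases (x k - x (k + 1)) with h | h
  · rw [h.1]
  · rw [h.1, sin_neg, log_neg_eq_log]

/-- cot of the k-th difference -/
def ct (x : Fin N → ℝ) (k : Fin N) : ℝ := cos (x k - x (k + 1)) / sin (x k - x (k + 1))

lemma pd_congr {E : Type} [NormedAddCommGroup E] [NormedSpace ℝ E] {F G : (Fin N → ℝ) → E}
    {x : Fin N → ℝ} (i : Fin N) (hx : x ∈ UU N) (h : ∀ y ∈ UU N, F y = G y) :
    pd i F x = pd i G x := by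
  unfold pd
  rw [Filter.EventuallyEq.fderiv_eq]
  exact Filter.eventually_of_mem (isOpen_UU.mem_nhds hx) h

lemma pd_eq {E : Type} [NormedAddCommGroup E] [NormedSpace ℝ E] {F : (Fin N → ℝ) → E}
    {F' : (Fin N → ℝ) →L[ℝ] E} {x : Fin N → ℝ} (i : Fin N) (h : HasFDerivAt F F' x) :
    pd i F x = F' (Pi.single i 1) := by
  unfold pd; rw [h.fderiv]

/-- the coefficient of the derivative of the k-th difference -/
def ee (i k : Fin N) : ℝ := (if k = i then 1 else 0) - (if k + 1 = i then 1 else 0)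

def du (k m : Fin N) : (Fin N → ℝ) →L[ℝ] ℝ :=
  ContinuousLinearMap.proj (R := ℝ) (φ := fun _ : Fin N => ℝ) k - ContinuousLinearMap.proj (R := ℝ) (φ := fun _ : Fin N => ℝ) m

lemma du_has (k m : Fin N) (x : Fin N → ℝ) : HasFDerivAt (fun y : Fin N → ℝ => y k - y m) (du k m) x :=
  (du k m).hasFDerivAt

lemma du_single (i k m : Fin N) :
    du k m (Pi.single i 1) = (if k = i then 1 else 0) - (if m = i then 1 else 0) := by
  simp [du, Pi.single_apply]

lemma mu_has (a : ℝ) {x : Fin N → ℝ} (hx : x ∈ UU N) :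
    HasFDerivAt (mu2 a) ((mu2 a x * a) • ∑ k, ct x k • du k (k + 1)) x := by
  have h1 : ∀ k : Fin N, HasFDerivAt (fun y : Fin N → ℝ => log (sin (y k - y (k + 1))))
      (ct x k • du k (k + 1)) x := by
    intro k
    have := ((du_has k (k + 1) x).sin).log (sin_ne_UU hx k)
    refine this.congr_fderiv ?_
    rw [smul_smul, ct, div_eq_inv_mul]
  have h2 := ((HasFDerivAt.fun_sum (u := Finset.univ) fun k _ => h1 k).const_mul a).exp
  have h3 : mu2 a =ᶠ[nhds x] fun y => exp (a * ∑ k, log (sin (y k - y (k + 1)))) :=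
    Filter.eventually_of_mem (isOpen_UU.mem_nhds hx) fun y hy => mu2_eq a hy
  refine (h2.congr_of_eventuallyEq h3).congr_fderiv ?_
  rw [← mu2_eq a hx, smul_smul]

def LL (i : Fin N) (x : Fin N → ℝ) : ℝ := ct x i - ct x (i - 1)

lemma sum_ite_succ (i : Fin N) (g : Fin N → ℝ) :
    ∑ k, g k * (if k + 1 = i then 1 else 0) = g (i - 1) := by
  rw [Finset.sum_eq_single (i - 1)]
  · simp
  · intro b _ hb
    rw [if_neg, mul_zero]
    intro h; exact hb (by rw [← h, add_sub_cancel_right])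
  · simp

lemma pd_mu (a : ℝ) {x : Fin N → ℝ} (hx : x ∈ UU N) (i : Fin N) :
    pd i (mu2 a) x = mu2 a x * (a * LL i x) := by
  rw [pd_eq i (mu_has a hx)]
  simp only [smul_apply, sum_apply, du_single, smul_eq_mul,
    mul_sub, Finset.sum_sub_distrib, LL, sum_ite_succ]
  simp
  ring

lemma ct_has {x : Fin N → ℝ} (hx : x ∈ UU N) (k : Fin N) :
    HasFDerivAt (fun y => ct y k) ((-(sin (x k - x (k + 1)) ^ 2)⁻¹) • du k (k + 1)) x := by
  have hs := sin_ne_UU hx k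
  have h1 := (hasDerivAt_cos (x k - x (k + 1))).fun_div (hasDerivAt_sin _) hs
  have h2 := h1.comp_hasFDerivAt x (du_has k (k + 1) x)
  refine h2.congr_fderiv ?_
  congr 1
  field_simp
  linear_combination (-1 : ℝ) * sin_sq_add_cos_sq (x k - x (k + 1))

lemma one_ne (hN : 3 ≤ N) : (1 : Fin N) ≠ 0 := by
  obtain ⟨n, rfl⟩ : ∃ n, N = n + 2 := ⟨N - 2, by omega⟩
  exact Fin.zero_ne_one.symm

lemma LL_has {x : Fin N → ℝ} (hx : x ∈ UU N) (i : Fin N) :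
    HasFDerivAt (LL i) ((-(sin (x i - x (i + 1)) ^ 2)⁻¹) • du i (i + 1) -
      (-(sin (x (i - 1) - x (i - 1 + 1)) ^ 2)⁻¹) • du (i - 1) (i - 1 + 1)) x :=
  (ct_has hx i).sub (ct_has hx (i - 1))

lemma pd_LL (hN : 3 ≤ N) {x : Fin N → ℝ} (hx : x ∈ UU N) (i : Fin N) :
    pd i (LL i) x = -(sin (x i - x (i + 1)) ^ 2)⁻¹ - (sin (x (i - 1) - x i) ^ 2)⁻¹ := by
  rw [pd_eq i (LL_has hx i)]
  have h1 : i + 1 ≠ i := by simpa using one_ne hN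
  have h2 : i - 1 ≠ i := by simpa using one_ne hN
  simp [du_single, h1, h2]

/-- trigonometric amplitude -/
def TT (A B u : ℝ) : ℝ := A * cos u + B * sin u
/-- its derivative is the same amplitude with rotated coefficients -/
lemma TT_has (A B u : ℝ) : HasDerivAt (TT A B) (TT B (-A) u) u := by
  have := ((hasDerivAt_cos u).const_mul A).add ((hasDerivAt_sin u).const_mul B)
  refine this.congr_deriv ?_
  unfold TT; ring

def GG (A B : ℝ) (j : Fin N) (x : Fin N → ℝ) : ℝ := ∑ m, TT A B (2 * (x m - x j))

lemma GG_has (A B : ℝ) (j : Fin N) (x : Fin N → ℝ) :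
    HasFDerivAt (GG A B j) (∑ m, TT B (-A) (2 * (x m - x j)) • ((2:ℝ) • du m j)) x := by
  refine HasFDerivAt.fun_sum fun m _ => ?_
  exact (TT_has A B _).comp_hasFDerivAt x ((du_has m j x).const_mul 2)

lemma pd_GG (A B : ℝ) (i j : Fin N) (x : Fin N → ℝ) : pd i (GG A B j) x =
    2 * TT B (-A) (2 * (x i - x j)) - (if j = i then 2 * GG B (-A) j x else 0) := by
  rw [pd_eq i (GG_has A B j x)]
  simp only [smul_apply, sum_apply, du_single, smul_eq_mul,
    mul_sub, Finset.sum_sub_distrib, GG]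
  split_ifs with h
  · simp [← Finset.sum_mul]; ring
  · simp; ring

lemma GG_diff (A B : ℝ) (j : Fin N) : Differentiable ℝ (GG A B j) :=
  fun x => (GG_has A B j x).differentiableAt

lemma pd_pd_GG (A B : ℝ) (i j : Fin N) (x : Fin N → ℝ) : pd i (pd i (GG A B j)) x =
    -4 * TT A B (2 * (x i - x j)) + (if j = i then 8 * A - 4 * GG A B j x else 0) := by
  have h0 : pd i (GG A B j) = fun x =>
    2 * TT B (-A) (2 * (x i - x j)) - (if j = i then 2 * GG B (-A) j x else 0) :=
    funext fun x => pd_GG A B i j x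
  rw [h0]
  have h1 : HasFDerivAt (fun y : Fin N → ℝ => 2 * TT B (-A) (2 * (y i - y j))) _ x :=
    (((TT_has B (-A) _).comp_hasFDerivAt x ((du_has i j x).const_mul 2))).const_mul 2
  by_cases h : j = i
  · subst h
    simp only [if_true]
    have h2 := h1.fun_sub ((GG_has B (-A) j x).const_mul 2)
    have h3 := pd_GG B (-A) j j x
    rw [pd_eq j (GG_has B (-A) j x)] at h3
    rw [pd_eq j h2, sub_apply]
    simp only [smul_apply]
    rw [h3]
    have h4 : GG (-A) (-B) j x = - GG A B j x := by
      simp only [GG, TT, ← Finset.sum_neg_distrib]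
      exact Finset.sum_congr rfl fun m _ => by ring
    simp [du_single, h4, TT]
    ring
  · simp only [if_neg h, sub_zero, add_zero]
    rw [pd_eq i h1]
    simp [du_single, h, TT]
    ring

lemma pd_GG_diff (A B : ℝ) (i j : Fin N) : Differentiable ℝ (pd i (GG A B j)) := by
  have h0 : pd i (GG A B j) = fun x =>
    2 * TT B (-A) (2 * (x i - x j)) - (if j = i then 2 * GG B (-A) j x else 0) :=
    funext fun x => pd_GG A B i j x
  rw [h0]
  have hT : Differentiable ℝ (fun x : Fin N → ℝ => 2 * TT B (-A) (2 * (x i - x j))) := by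
    unfold TT; fun_prop
  have hG := (GG_diff B (-A) j).const_mul 2
  split_ifs
  · exact hT.fun_sub hG
  · exact hT.fun_sub (differentiable_const _)

lemma pd_mul {f g : (Fin N → ℝ) → ℝ} {x : Fin N → ℝ} (i : Fin N) (hf : DifferentiableAt ℝ f x)
    (hg : DifferentiableAt ℝ g x) :
    pd i (fun y => f y * g y) x = f x * pd i g x + pd i f x * g x := by
  rw [pd_eq i (hf.hasFDerivAt.fun_mul hg.hasFDerivAt)]
  simp [pd]
  ring

lemma pd_add {f g : (Fin N → ℝ) → ℝ} {x : Fin N → ℝ} (i : Fin N) (hf : DifferentiableAt ℝ f x)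
    (hg : DifferentiableAt ℝ g x) :
    pd i (fun y => f y + g y) x = pd i f x + pd i g x := by
  rw [pd_eq i (hf.hasFDerivAt.fun_add hg.hasFDerivAt)]
  simp [pd]

lemma mu_diff (a : ℝ) {x : Fin N → ℝ} (hx : x ∈ UU N) : DifferentiableAt ℝ (mu2 a) x :=
  (mu_has a hx).differentiableAt

lemma LL_diff {x : Fin N → ℝ} (hx : x ∈ UU N) (i : Fin N) : DifferentiableAt ℝ (LL i) x :=
  (LL_has hx i).differentiableAt

lemma pd_prod (a : ℝ) {F : (Fin N → ℝ) → ℝ} (hF : Differentiable ℝ F) (i : Fin N)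
    {x : Fin N → ℝ} (hx : x ∈ UU N) :
    pd i (fun y => mu2 a y * F y) x = mu2 a x * ((a * LL i x) * F x + pd i F x) := by
  rw [pd_mul i (mu_diff a hx) (hF x), pd_mu a hx]; ring

lemma inner_diff (a : ℝ) {F : (Fin N → ℝ) → ℝ} (hF : Differentiable ℝ F) (i : Fin N)
    (hF2 : Differentiable ℝ (pd i F)) {x : Fin N → ℝ} (hx : x ∈ UU N) :
    DifferentiableAt ℝ (fun y => (a * LL i y) * F y + pd i F y) x :=
  (((LL_diff hx i).const_mul a).fun_mul (hF x)).fun_add (hF2 x)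

lemma pd_prod_diff (a : ℝ) {F : (Fin N → ℝ) → ℝ} (hF : Differentiable ℝ F) (i : Fin N)
    (hF2 : Differentiable ℝ (pd i F)) {x : Fin N → ℝ} (hx : x ∈ UU N) :
    DifferentiableAt ℝ (pd i (fun y => mu2 a y * F y)) x := by
  have h3 : pd i (fun y => mu2 a y * F y) =ᶠ[nhds x]
      fun y => mu2 a y * ((a * LL i y) * F y + pd i F y) :=
    Filter.eventually_of_mem (isOpen_UU.mem_nhds hx) fun y hy => pd_prod a hF i hy
  exact ((mu_diff a hx).fun_mul (inner_diff a hF i hF2 hx)).congr_of_eventuallyEq h3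

lemma pd_pd_prod (a : ℝ) {F : (Fin N → ℝ) → ℝ} (hF : Differentiable ℝ F) (i : Fin N)
    (hF2 : Differentiable ℝ (pd i F)) {x : Fin N → ℝ} (hx : x ∈ UU N) :
    pd i (pd i (fun y => mu2 a y * F y)) x = mu2 a x *
      (a ^ 2 * F x * LL i x ^ 2 + a * F x * pd i (LL i) x + 2 * a * (LL i x * pd i F x)
        + pd i (pd i F) x) := by
  have hL := LL_diff hx i
  have hc : pd i (fun y => a * LL i y) x = a * pd i (LL i) x := by
    rw [pd_mul i (differentiableAt_const a) hL]; simp [pd]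
  rw [pd_congr i hx fun y hy => pd_prod a hF i hy,
    pd_mul i (mu_diff a hx) (inner_diff a hF i hF2 hx), pd_mu a hx,
    pd_add i ((hL.const_mul a).fun_mul (hF x)) (hF2 x), pd_mul i (hL.const_mul a) (hF x), hc]
  ring

/-- the scalar amplitudes -/
def FF (a A B : ℝ) (j : Fin N) (x : Fin N → ℝ) : ℝ := GG A B j x + -(A / (2 * a + 1))

lemma FF_diff (a A B : ℝ) (j : Fin N) : Differentiable ℝ (FF a A B j) :=
  (GG_diff A B j).add_const _

lemma pd_FF (a A B : ℝ) (i j : Fin N) : pd i (FF a A B j) = pd i (GG A B j) := by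
  funext x
  unfold FF
  rw [pd_add i (GG_diff A B j x) (differentiableAt_const _)]
  simp [pd]

lemma sum_pred (g : Fin N → ℝ) : ∑ i, g (i - 1) = ∑ i, g i :=
  Equiv.sum_comp (Equiv.subRight (1 : Fin N)) g

/-- inverse squared sine -/
def qq (x : Fin N → ℝ) (i : Fin N) : ℝ := (sin (x i - x (i + 1)) ^ 2)⁻¹

lemma qq_eq {x : Fin N → ℝ} (hx : x ∈ UU N) (i : Fin N) : qq x i = 1 + ct x i ^ 2 := by
  have := sin_ne_UU hx i
  unfold qq ct
  field_simp
  linarith [sin_sq_add_cos_sq (x i - x (i + 1))]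

lemma S1 (x : Fin N → ℝ) :
    ∑ i, LL i x ^ 2 = 2 * ∑ i, ct x i ^ 2 - 2 * ∑ i, ct x (i - 1) * ct x i := by
  have h := sum_pred fun i => ct x i ^ 2
  calc ∑ i, LL i x ^ 2 = ∑ i, (ct x i ^ 2 + ct x (i - 1) ^ 2 - 2 * (ct x (i - 1) * ct x i)) :=
        Finset.sum_congr rfl fun i _ => by unfold LL; ring
    _ = _ := by
        rw [Finset.sum_sub_distrib, Finset.sum_add_distrib, h, ← Finset.mul_sum]; ring

lemma S2 (hN : 3 ≤ N) {x : Fin N → ℝ} (hx : x ∈ UU N) :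
    ∑ i, pd i (LL i) x = -2 * ∑ i, qq x i := by
  have h := sum_pred fun i => qq x i
  calc ∑ i, pd i (LL i) x = ∑ i, (-qq x i - qq x (i - 1)) :=
        Finset.sum_congr rfl fun i _ => by rw [pd_LL hN hx]; unfold qq; rw [sub_add_cancel]
    _ = _ := by
        rw [Finset.sum_sub_distrib, h, Finset.sum_neg_distrib]; ring

lemma S6 {x : Fin N → ℝ} (hx : x ∈ UU N) : ∑ i, qq x i = N + ∑ i, ct x i ^ 2 := by
  simp [qq_eq hx, Finset.sum_add_distrib]

lemma S4 (A B : ℝ) (j : Fin N) (x : Fin N → ℝ) :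
    ∑ i, pd i (pd i (GG A B j)) x = -8 * GG A B j x + 8 * A := by
  simp only [pd_pd_GG, Finset.sum_add_distrib, ← Finset.mul_sum, Finset.sum_ite_eq,
    Finset.mem_univ, if_true]
  rw [← GG]; ring

lemma trig_id (A B α θ : ℝ) (hs : sin θ ≠ 0) :
    cos θ / sin θ * (TT B (-A) (α + 2 * θ) - TT B (-A) α) = -(TT A B (α + 2 * θ) + TT A B α) := by
  unfold TT
  rw [cos_add, sin_add, cos_two_mul, sin_two_mul]
  field_simp
  have h : sin θ ^ 2 = 1 - cos θ ^ 2 := by linarith [sin_sq_add_cos_sq θ]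
  ring_nf
  try rw [h]
  ring

lemma trig_id2 (A B α θ : ℝ) (hs : sin θ ≠ 0) :
    (sin θ ^ 2)⁻¹ * (TT A B α - TT A B (α + 2 * θ)) =
      2 * TT A B α - 2 * (cos θ / sin θ) * TT B (-A) α := by
  unfold TT
  rw [cos_add, sin_add, cos_two_mul, sin_two_mul]
  field_simp
  have h : cos θ ^ 2 = 1 - sin θ ^ 2 := by linarith [sin_sq_add_cos_sq θ]
  rw [h]
  ring

lemma S3 (A B : ℝ) (j : Fin N) {x : Fin N → ℝ} (hx : x ∈ UU N) :
    ∑ i, LL i x * pd i (GG A B j) x =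
      -4 * GG A B j x - 2 * (ct x j - ct x (j - 1)) * GG B (-A) j x := by
  set t : Fin N → ℝ := fun i => TT B (-A) (2 * (x i - x j)) with ht
  set r : Fin N → ℝ := fun i => TT A B (2 * (x i - x j)) with hr
  have h1 : ∀ i, ct x i * (t i - t (i + 1)) = -(r i + r (i + 1)) := by
    intro i
    have := trig_id A B (2 * (x (i + 1) - x j)) (x i - x (i + 1)) (sin_ne_UU hx i)
    rw [show 2 * (x (i + 1) - x j) + 2 * (x i - x (i + 1)) = 2 * (x i - x j) by ring] at this
    exact this
  have h2 := sum_pred fun i => ct x i * t (i + 1)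
  have h3 : ∑ i, r (i + 1) = ∑ i, r i := Equiv.sum_comp (Equiv.addRight (1 : Fin N)) r
  have h4 : ∑ i, LL i x * t i = -2 * GG A B j x := by
    calc ∑ i, LL i x * t i = ∑ i, ct x i * t i - ∑ i, ct x (i - 1) * t (i - 1 + 1) := by
          rw [← Finset.sum_sub_distrib]
          exact Finset.sum_congr rfl fun i _ => by rw [sub_add_cancel]; unfold LL; ring
      _ = ∑ i, ct x i * (t i - t (i + 1)) := by
          rw [h2, ← Finset.sum_sub_distrib]
          exact Finset.sum_congr rfl fun i _ => by ring
      _ = _ := by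
          simp only [h1, Finset.sum_neg_distrib, Finset.sum_add_distrib, h3]
          rw [GG]; ring
  calc ∑ i, LL i x * pd i (GG A B j) x
      = ∑ i, (2 * (LL i x * t i) - if j = i then LL i x * (2 * GG B (-A) j x) else 0) :=
        Finset.sum_congr rfl fun i _ => by rw [pd_GG]; split_ifs <;> ring
    _ = _ := by
        rw [Finset.sum_sub_distrib, ← Finset.mul_sum, h4, Finset.sum_ite_eq]
        simp only [Finset.mem_univ, if_true, LL]; ring

lemma exch (A B : ℝ) (j k : Fin N) (x : Fin N → ℝ) (hs : sin (x j - x k) ≠ 0) :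
    (sin (x j - x k) ^ 2)⁻¹ * (GG A B j x - GG A B k x) =
      2 * GG A B j x - 2 * (cos (x j - x k) / sin (x j - x k)) * GG B (-A) j x := by
  unfold GG
  rw [← Finset.sum_sub_distrib, Finset.mul_sum, Finset.mul_sum, Finset.mul_sum,
    ← Finset.sum_sub_distrib]
  refine Finset.sum_congr rfl fun m _ => ?_
  rw [← trig_id2 A B _ _ hs]
  congr 3
  ring

lemma S5 (hN : 3 ≤ N) (a A B : ℝ) (j : Fin N) {x : Fin N → ℝ} (hx : x ∈ UU N) :
    ∑ i, qq x i * (FF a A B j x - FF a A B (Equiv.swap i (i + 1) j) x) =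
      4 * GG A B j x - 2 * (ct x j - ct x (j - 1)) * GG B (-A) j x := by
  have h0 : ∀ i, qq x i * (FF a A B j x - FF a A B (Equiv.swap i (i + 1) j) x) =
      (if j = i then qq x i * (GG A B j x - GG A B (j + 1) x) else 0) +
        (qq x i * (GG A B j x - GG A B i x)) * (if i + 1 = j then 1 else 0) := by
    intro i
    have hi : i + 1 ≠ i := by simpa using one_ne hN
    by_cases h1 : j = i
    · subst h1; simp [hi, FF]
    · by_cases h2 : i + 1 = j
      · subst h2; simp [hi, FF]
      · rw [Equiv.swap_apply_of_ne_of_ne h1 (Ne.symm h2)]; simp [h1, h2]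
  simp only [h0, Finset.sum_add_distrib, sum_ite_succ, Finset.sum_ite_eq, Finset.mem_univ, if_true]
  have e1 := exch A B j (j + 1) x (sin_ne_UU hx j)
  have hs := sin_ne_UU hx (j - 1)
  rw [sub_add_cancel, ← neg_sub, sin_neg, neg_ne_zero] at hs
  have e2 := exch A B j (j - 1) x hs
  have e3 : qq x (j - 1) = (sin (x j - x (j - 1)) ^ 2)⁻¹ := by
    unfold qq; rw [sub_add_cancel, ← neg_sub, sin_neg, neg_sq]
  have e4 : ct x (j - 1) = -(cos (x j - x (j - 1)) / sin (x j - x (j - 1))) := by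
    unfold ct; rw [sub_add_cancel, ← neg_sub (x j), sin_neg, cos_neg, div_neg]
  rw [e3, e2, qq, e1, e4, ct]
  ring

lemma scalar_eq (hN : 3 ≤ N) (a A B : ℝ) (ha : 2 * a + 1 ≠ 0) (j : Fin N) {x : Fin N → ℝ}
    (hx : x ∈ UU N) :
    -(∑ i, pd i (pd i (fun y => mu2 a y * FF a A B j y)) x)
    + (2 * a ^ 2 * ∑ i : Fin N,
        (cos (x i - x (i - 1)) / sin (x i - x (i - 1))) *
          (cos (x i - x (i + 1)) / sin (x i - x (i + 1)))) * (mu2 a x * FF a A B j x)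
    + (2 * a) * ∑ i : Fin N, ((sin (x i - x (i + 1))) ^ 2)⁻¹ * (a * (mu2 a x * FF a A B j x)
        - mu2 a x * FF a A B (Equiv.swap i (i + 1) j) x) =
    (2 * N * a ^ 2 + 8 * (2 * a + 1)) * (mu2 a x * FF a A B j x) := by
  have hd : ∀ i, Differentiable ℝ (pd i (FF a A B j)) := fun i => by
    rw [pd_FF]; exact pd_GG_diff A B i j
  have e1 : ∑ i, pd i (pd i (fun y => mu2 a y * FF a A B j y)) x =
      mu2 a x * (a ^ 2 * FF a A B j x * ∑ i, LL i x ^ 2 + a * FF a A B j x * ∑ i, pd i (LL i) x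
        + 2 * a * ∑ i, LL i x * pd i (GG A B j) x + ∑ i, pd i (pd i (GG A B j)) x) := by
    simp only [Finset.mul_sum, ← Finset.sum_add_distrib]
    refine Finset.sum_congr rfl fun i _ => ?_
    rw [pd_pd_prod a (FF_diff a A B j) i (hd i) hx, pd_FF]
  have e2 : ∑ i : Fin N, (cos (x i - x (i - 1)) / sin (x i - x (i - 1))) *
          (cos (x i - x (i + 1)) / sin (x i - x (i + 1))) = - ∑ i, ct x (i - 1) * ct x i := by
    rw [← Finset.sum_neg_distrib]
    refine Finset.sum_congr rfl fun i _ => ?_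
    unfold ct
    rw [sub_add_cancel, ← neg_sub (x i) (x (i - 1)), sin_neg, cos_neg, div_neg]
    ring
  have e3 : ∑ i : Fin N, ((sin (x i - x (i + 1))) ^ 2)⁻¹ * (a * (mu2 a x * FF a A B j x)
        - mu2 a x * FF a A B (Equiv.swap i (i + 1) j) x) =
      mu2 a x * ((a - 1) * FF a A B j x * ∑ i, qq x i +
        ∑ i, qq x i * (FF a A B j x - FF a A B (Equiv.swap i (i + 1) j) x)) := by
    simp only [Finset.mul_sum, ← Finset.sum_add_distrib]
    refine Finset.sum_congr rfl fun i _ => ?_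
    unfold qq
    ring
  rw [e1, e2, e3, S1, S2 hN hx, S3 A B j hx, S4, S5 hN a A B j hx, S6 hx]
  have hF : GG A B j x = FF a A B j x + A / (2 * a + 1) := by unfold FF; ring
  rw [hF]
  have hA : (2 * a + 1) * (A / (2 * a + 1)) = A := mul_div_cancel₀ A ha
  linear_combination (mu2 a x * 8) * hA

lemma pd_vec {d : ℕ} {h : Fin N → (Fin N → ℝ) → ℝ} (v : Fin N → Spin N d) (i : Fin N)
    {x : Fin N → ℝ} (hh : ∀ j, DifferentiableAt ℝ (h j) x) :
    pd i (fun y => ∑ j, h j y • v j) x = ∑ j, pd i (h j) x • v j := by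
  have := HasFDerivAt.fun_sum (u := Finset.univ) fun j _ =>
    ((hh j).hasFDerivAt.smul_const (v j))
  rw [pd_eq i this]
  simp [pd]

lemma Sop_sComp {d : ℕ} (s : Spin N d) (i k j : Fin N) :
    Sop i k (sComp s j) = sComp s (Equiv.swap i k j) := by
  funext c
  unfold Sop sComp
  simp only [Pi.smul_apply, Finset.sum_apply]
  congr 1
  refine Finset.sum_bij' (fun p _ => Equiv.swap i k * p) (fun p _ => Equiv.swap i k * p) ?_ ?_ ?_ ?_ ?_
  · intro p hp; simp at hp ⊢; rw [hp]
  · intro p hp; simp at hp ⊢; rw [hp]; simp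
  · intro p _; simp
  · intro p _; simp
  · intro p _; rfl

lemma Sop_sum {d : ℕ} (s : Spin N d) (i k : Fin N) (w : Fin N → ℝ) :
    Sop i k (∑ j, w j • sComp s j) = ∑ j, w (Equiv.swap i k j) • sComp s j := by
  have h1 : Sop i k (∑ j, w j • sComp s j) = ∑ j, w j • Sop i k (sComp s j) := by
    funext c; simp [Sop]
  rw [h1, ← Equiv.sum_comp (Equiv.swap i k)]
  simp [Sop_sComp]

lemma main_eq {d : ℕ} (hN : 3 ≤ N) (a A B : ℝ) (ha : 2 * a + 1 ≠ 0) (s : Spin N d)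
    {x : Fin N → ℝ} (hx : x ∈ UU N) :
    H2 a (fun y => ∑ j, (mu2 a y * FF a A B j y) • sComp s j) x =
      (2 * N * a ^ 2 + 8 * (2 * a + 1)) • ∑ j, (mu2 a x * FF a A B j x) • sComp s j := by
  have hd : ∀ i j : Fin N, Differentiable ℝ (pd i (FF a A B j)) := fun i j => by
    rw [pd_FF a A B i j]; exact pd_GG_diff A B i j
  have h1 : ∀ i, pd i (pd i (fun y => ∑ j, (mu2 a y * FF a A B j y) • sComp s j)) x =
      ∑ j, pd i (pd i (fun y => mu2 a y * FF a A B j y)) x • sComp s j := by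
    intro i
    rw [pd_congr i hx (fun y hy => pd_vec (sComp s) i
      fun j => (mu_diff a hy).fun_mul (FF_diff a A B j y))]
    exact pd_vec (sComp s) i fun j => pd_prod_diff a (FF_diff a A B j) i (hd i j) hx
  unfold H2
  simp only [h1, Sop_sum]
  have e0 : (2 * (N : ℝ) * a ^ 2 + 8 * (2 * a + 1)) • ∑ j, (mu2 a x * FF a A B j x) • sComp s j
      = ∑ j, ((2 * (N : ℝ) * a ^ 2 + 8 * (2 * a + 1)) * (mu2 a x * FF a A B j x)) • sComp s j := by
    simp only [Finset.smul_sum, smul_smul]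
  rw [e0]
  simp only [← scalar_eq hN a A B ha _ hx, add_smul, neg_smul, Finset.sum_add_distrib,
    Finset.sum_neg_distrib]
  refine congrArg₂ (· + ·) (congrArg₂ (· + ·) (congrArg _ ?_) ?_) ?_
  · rw [Finset.sum_comm]
    simp only [Finset.sum_smul]
  · simp only [Finset.smul_sum, smul_smul]
  · simp only [mul_smul, ← Finset.smul_sum, Finset.sum_smul, sub_smul]
    rw [Finset.sum_comm]
    simp only [Finset.smul_sum, ← Finset.sum_sub_distrib, smul_sub]

lemma combine {d : ℕ} (a A B k : ℝ) (hk : k = A - A / (2 * a + 1)) (s : Spin N d)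
    (y : Fin N → ℝ) :
    mu2 a y • (k • Lam s +
            ∑ i : Fin N, ∑ j ∈ Finset.univ.erase i,
              TT A B (2 * (y i - y j)) • sComp s j) =
      ∑ j, (mu2 a y * FF a A B j y) • sComp s j := by
  have h1 : ∑ i : Fin N, ∑ j ∈ Finset.univ.erase i, TT A B (2 * (y i - y j)) • sComp s j =
      ∑ j, (GG A B j y - A) • sComp s j := by
    have h2 : ∀ i : Fin N, ∑ j ∈ Finset.univ.erase i, TT A B (2 * (y i - y j)) • sComp s j =
        ∑ j, TT A B (2 * (y i - y j)) • sComp s j - A • sComp s i := by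
      intro i
      rw [← Finset.sum_erase_add _ _ (Finset.mem_univ i)]
      simp [TT]
    simp only [h2, Finset.sum_sub_distrib, sub_smul]
    rw [Finset.sum_comm]
    simp only [GG, Finset.sum_smul]
  rw [h1, Lam, Finset.smul_sum, ← Finset.sum_add_distrib, Finset.smul_sum]
  refine Finset.sum_congr rfl fun j _ => ?_
  rw [← add_smul, smul_smul, hk, FF]
  congr 2
  ring

end helpers
theorem stmt_16 (N d : ℕ) [NeZero N] (hN : 3 ≤ N) (hd : 1 ≤ d)
    (a : ℝ) (ha : 1 / 2 < a) (s : Spin N d) :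
    (∀ x ∈ C2 N,
      H2 a (fun y => mu2 a y •
          ((2 * a / (2 * a + 1)) • Lam s +
            ∑ i : Fin N, ∑ j ∈ Finset.univ.erase i,
              Real.cos (2 * (y i - y j)) • sComp s j)) x =
        (2 * N * a ^ 2 + 8 * (2 * a + 1)) •
          (mu2 a x •
            ((2 * a / (2 * a + 1)) • Lam s +
              ∑ i : Fin N, ∑ j ∈ Finset.univ.erase i,
                Real.cos (2 * (x i - x j)) • sComp s j))) ∧
    (∀ x ∈ C2 N,
      H2 a (fun y => mu2 a y •
          ∑ i : Fin N, ∑ j ∈ Finset.univ.erase i,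
            Real.sin (2 * (y i - y j)) • sComp s j) x =
        (2 * N * a ^ 2 + 8 * (2 * a + 1)) •
          (mu2 a x •
            ∑ i : Fin N, ∑ j ∈ Finset.univ.erase i,
              Real.sin (2 * (x i - x j)) • sComp s j)) := by
  have h2 : 2 * a + 1 ≠ 0 := by linarith
  constructor
  · intro x hx
    have h := main_eq hN a 1 0 h2 s (C2_sub hN hx)
    have hk : 2 * a / (2 * a + 1) = 1 - 1 / (2 * a + 1) := by field_simp; ring
    simp only [← combine a 1 0 _ hk] at h
    simpa only [TT, one_mul, zero_mul, add_zero] using h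
  · intro x hx
    have h := main_eq hN a 0 1 h2 s (C2_sub hN hx)
    have hk : (0 : ℝ) = 0 - 0 / (2 * a + 1) := by simp
    simp only [← combine a 0 1 _ hk] at h
    simpa only [TT, one_mul, zero_mul, zero_add, zero_smul] using h
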